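/- For each n ∈ ℕ with n ≥ 1, the class of languages recognized by register set automata with at most n registers is not closed under intersection: there exist data-word languages L₁ and L₂, each recognized by an RsA with at most n registers, such that L₁ ∩ L₂ is not recognized by any RsA with at most n registers. -/

import Mathlib

/-- A data word over alphabet `Sigma`, with data domain `𝔻 = ℕ`. -/
abbrev DataWord (Sigma : Type) : Type :=
  List (Sigma × ℕ)
/-- A transition `(src, letter, gIn, gNin, upd, tgt)` of a register set automaton.
In the update, `none` stands for the current input value `in`, and `some r`
for register `r`. -/
structure RsATrans (Sigma : Type) where
  src : ℕ
  letter : Sigma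
  gIn : Finset ℕ
  gNin : Finset ℕ
  upd : ℕ → Finset (Option ℕ)
  tgt : ℕ

/-- The register assignment obtained after taking transition `t` with current input
data value `d`, starting from the assignment `f`: each register gets the union of
the contents of the registers in its update set, together with `{d}` if the update
set contains `in`. -/
def RsATrans.apply {Sigma : Type} (t : RsATrans Sigma) (f : ℕ → Finset ℕ) (d : ℕ) :
    ℕ → Finset ℕ := fun r =>
  (t.upd r).biUnion fun o =>
    match o with
    | none => {d}
    | some r' => f r'

/-- A register set automaton (RsA); states and registers are drawn from `ℕ`. -/
structure RsA (Sigma : Type) where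
  Q : Finset ℕ
  R : Finset ℕ
  Δ : Set (RsATrans Sigma)
  I : Finset ℕ
  F : Finset ℕ
  finite_trans : Δ.Finite
  I_sub : I ⊆ Q
  F_sub : F ⊆ Q
  wf : ∀ t ∈ Δ, t.src ∈ Q ∧ t.tgt ∈ Q ∧ t.gIn ⊆ R ∧ t.gNin ⊆ R ∧
    Disjoint t.gIn t.gNin ∧ ∀ r ∈ R, ∀ r' : ℕ, some r' ∈ t.upd r → r' ∈ R

/-- One step of an RsA from configuration `c` to configuration `c'`, reading
the letter `x`. -/
def RsA.Step {Sigma : Type} (A : RsA Sigma) (c : ℕ × (ℕ → Finset ℕ)) (x : Sigma × ℕ)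
    (c' : ℕ × (ℕ → Finset ℕ)) : Prop :=
  ∃ t ∈ A.Δ, t.src = c.1 ∧ t.letter = x.1 ∧
    (∀ r ∈ t.gIn, x.2 ∈ c.2 r) ∧ (∀ r ∈ t.gNin, x.2 ∉ c.2 r) ∧
    c' = (t.tgt, t.apply c.2 x.2)

/-- `A.Run c w c'` holds iff `A` can read the data word `w` going from
configuration `c` to configuration `c'`. -/
inductive RsA.Run {Sigma : Type} (A : RsA Sigma) :
    (ℕ × (ℕ → Finset ℕ)) → DataWord Sigma → (ℕ × (ℕ → Finset ℕ)) → Prop where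
  | nil (c : ℕ × (ℕ → Finset ℕ)) : RsA.Run A c [] c
  | cons {c c' c'' : ℕ × (ℕ → Finset ℕ)} {x : Sigma × ℕ} {w : DataWord Sigma} :
      A.Step c x c' → RsA.Run A c' w c'' → RsA.Run A c (x :: w) c''

/-- The language of an RsA: words on which there exists an accepting run
starting from some initial state with all registers empty. -/
def RsA.Lang {Sigma : Type} (A : RsA Sigma) : Set (DataWord Sigma) :=
  { w | ∃ q₀ ∈ A.I, ∃ c : ℕ × (ℕ → Finset ℕ),
      A.Run (q₀, fun _ => ∅) w c ∧ c.1 ∈ A.F }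

/-!
A configuration of an automaton with `n` registers distinguishes two data values only by the set
of registers containing them. So among any `2 ^ n + 1` values two can be exchanged in the rest of
the input without affecting acceptance, and no such automaton can force `2 ^ n` values of the second
half of the input to be those of the first half.

Two automata together can. Store the values of the first half of the input, the `i`-th one in the
registers of a set `c i`, and then require the `j`-th value of the second half to lie in exactly the
registers of `c j`. If `c` is injective, `c j` is nonempty and the first half has no repetitions,
this forces the `j`-th values of the two halves to agree. Only the empty code is useless, as it is
also the code of every value never stored. If `c` enumerates all `2 ^ n` sets of registers, the
complementary code has its blind spot at a different position, so the intersection of the two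
languages has none.
-/

section Runs

namespace RsA

variable {Sigma : Type} {A : RsA Sigma}

lemma run_nil_iff {c c' : ℕ × (ℕ → Finset ℕ)} : A.Run c [] c' ↔ c' = c := by
  constructor
  · rintro ⟨⟩
    rfl
  · rintro rfl
    exact .nil _

lemma run_cons_iff {c c'' : ℕ × (ℕ → Finset ℕ)} {x : Sigma × ℕ} {w : DataWord Sigma} :
    A.Run c (x :: w) c'' ↔ ∃ c', A.Step c x c' ∧ A.Run c' w c'' := by
  constructor
  · rintro (_ | ⟨hstep, hrun⟩)
    exact ⟨_, hstep, hrun⟩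
  · rintro ⟨c', hstep, hrun⟩
    exact .cons hstep hrun

lemma run_append_iff {c c'' : ℕ × (ℕ → Finset ℕ)} {u v : DataWord Sigma} :
    A.Run c (u ++ v) c'' ↔ ∃ c', A.Run c u c' ∧ A.Run c' v c'' := by
  induction u generalizing c with
  | nil => simp only [List.nil_append, run_nil_iff, exists_eq_left]
  | cons x u ih =>
    simp only [List.cons_append, run_cons_iff, ih]
    constructor
    · rintro ⟨d, hstep, d', hu, hv⟩
      exact ⟨d', ⟨d, hstep, hu⟩, hv⟩
    · rintro ⟨d', ⟨d, hstep, hu⟩, hv⟩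
      exact ⟨d, hstep, d', hu, hv⟩

end RsA

end Runs

section Renaming

/-- The data word obtained from `w` by replacing each data value `d` by `π d`. -/
def DataWord.rename {Sigma : Type} (π : ℕ → ℕ) (w : DataWord Sigma) : DataWord Sigma :=
  w.map (Prod.map id π)

namespace RsA

variable {Sigma : Type} {A : RsA Sigma} {π : ℕ → ℕ}

lemma Step.rename (hπ : π.Injective) {q : ℕ} {f g : ℕ → Finset ℕ} {x : Sigma × ℕ}
    {c : ℕ × (ℕ → Finset ℕ)} (hfg : ∀ r ∈ A.R, ∀ d, d ∈ f r ↔ π d ∈ g r)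
    (hstep : A.Step (q, f) x c) :
    ∃ g', A.Step (q, g) (x.1, π x.2) (c.1, g') ∧ ∀ r ∈ A.R, ∀ d, d ∈ c.2 r ↔ π d ∈ g' r := by
  obtain ⟨t, ht, hsrc, hletter, hin, hnin, rfl⟩ := hstep
  obtain ⟨-, -, hinR, hninR, -, hupdR⟩ := A.wf t ht
  refine ⟨t.apply g (π x.2), ⟨t, ht, hsrc, hletter, fun r hr ↦ (hfg r (hinR hr) _).1 (hin r hr),
    fun r hr h ↦ hnin r hr ((hfg r (hninR hr) _).2 h), rfl⟩, fun r hr d ↦ ?_⟩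
  simp only [RsATrans.apply, Finset.mem_biUnion]
  refine exists_congr fun o ↦ and_congr_right fun ho ↦ ?_
  cases o with
  | none => simp only [Finset.mem_singleton, hπ.eq_iff]
  | some r' => exact hfg r' (hupdR r hr r' ho) d

lemma Run.rename (hπ : π.Injective) {q : ℕ} {f g : ℕ → Finset ℕ} {w : DataWord Sigma}
    {c : ℕ × (ℕ → Finset ℕ)} (hfg : ∀ r ∈ A.R, ∀ d, d ∈ f r ↔ π d ∈ g r)
    (hrun : A.Run (q, f) w c) : ∃ g', A.Run (q, g) (w.rename π) (c.1, g') := by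
  induction w generalizing q f g with
  | nil =>
    obtain rfl := run_nil_iff.1 hrun
    exact ⟨g, .nil _⟩
  | cons x w ih =>
    obtain ⟨c', hstep, hrun⟩ := run_cons_iff.1 hrun
    obtain ⟨g₁, hstep', hfg'⟩ := hstep.rename hπ hfg
    obtain ⟨g', hrun'⟩ := ih hfg' hrun
    exact ⟨g', .cons hstep' hrun'⟩

theorem exists_append_rename_swap_mem_lang {D : Finset ℕ} (hD : 2 ^ A.R.card < D.card)
    {u v : DataWord Sigma} (huv : u ++ v ∈ A.Lang) :
    ∃ x ∈ D, ∃ y ∈ D, x ≠ y ∧ u ++ v.rename (Equiv.swap x y) ∈ A.Lang := by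
  obtain ⟨q₀, hq₀, c, hrun, hc⟩ := huv
  obtain ⟨⟨q, f⟩, hu, hv⟩ := run_append_iff.1 hrun
  obtain ⟨x, hx, y, hy, hxy, heq⟩ : ∃ x ∈ D, ∃ y ∈ D, x ≠ y ∧
      {r ∈ A.R | x ∈ f r} = {r ∈ A.R | y ∈ f r} :=
    Finset.exists_ne_map_eq_of_card_lt_of_maps_to (t := A.R.powerset)
      (by rwa [Finset.card_powerset])
      fun d _ ↦ Finset.mem_coe.2 (Finset.mem_powerset.2 (Finset.filter_subset _ _))
  have hiff : ∀ r ∈ A.R, (x ∈ f r ↔ y ∈ f r) := Finset.filter_inj'.1 heq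
  have hswap : ∀ r ∈ A.R, ∀ d, d ∈ f r ↔ Equiv.swap x y d ∈ f r := by
    intro r hr d
    rcases eq_or_ne d x with rfl | hdx
    · rw [Equiv.swap_apply_left, hiff r hr]
    rcases eq_or_ne d y with rfl | hdy
    · rw [Equiv.swap_apply_right, hiff r hr]
    · rw [Equiv.swap_apply_of_ne_of_ne hdx hdy]
  obtain ⟨g, hv'⟩ := hv.rename (Equiv.swap x y).injective hswap
  exact ⟨x, hx, y, hy, hxy, q₀, hq₀, (c.1, g), run_append_iff.2 ⟨_, hu, hv'⟩, hc⟩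

theorem card_lt_two_pow_card_registers {D : Finset ℕ} {u v : DataWord Sigma}
    (huv : u ++ v ∈ A.Lang)
    (hfix : ∀ π : Equiv.Perm ℕ, u ++ v.rename π ∈ A.Lang → ∀ d ∈ D, π d = d) :
    D.card < 2 ^ A.R.card := by
  by_contra! hcard
  obtain ⟨z, hz⟩ := Infinite.exists_notMem_finset D
  have hcard' : 2 ^ A.R.card < (insert z D).card := by
    rw [Finset.card_insert_of_notMem hz]
    exact Nat.lt_succ_of_le hcard
  obtain ⟨x, hx, y, hy, hxy, hswap⟩ := exists_append_rename_swap_mem_lang hcard' huv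
  have hxD : x ∉ D := fun h ↦ hxy (by simpa using (hfix _ hswap x h).symm)
  have hyD : y ∉ D := fun h ↦ hxy (by simpa using hfix _ hswap y h)
  have hxz : x = z := (Finset.mem_insert.1 hx).resolve_right hxD
  have hyz : y = z := (Finset.mem_insert.1 hy).resolve_right hyD
  exact hxy (hxz.trans hyz.symm)

end RsA

end Renaming

section CodeAutomaton

variable {Sigma : Type} (c : ℕ → Finset ℕ) (m : ℕ)

/-- The registers occurring in the codes of the positions below `m`. -/
def codeRegisters : Finset ℕ :=
  (Finset.range m).biUnion c

/-- The transition at position `k` of the first half, which adds the input value to the registers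
in `c k`. -/
def storeTrans (k : ℕ) (a : Sigma) : RsATrans Sigma where
  src := k
  letter := a
  gIn := ∅
  gNin := ∅
  upd r := if r ∈ c k then {some r, none} else {some r}
  tgt := k + 1

/-- The transition at position `j` of the second half, which tests that the registers containing
the input value are exactly those in `c j`. -/
def testTrans (j : ℕ) (a : Sigma) : RsATrans Sigma where
  src := m + j
  letter := a
  gIn := c j
  gNin := codeRegisters c m \ c j
  upd r := {some r}
  tgt := m + j + 1

variable (Sigma) in
/-- The automaton on words of length `2 * m` that stores the `i`-th value of the first half in the
registers of the code `c i` and requires the `j`-th value of the second half to be stored in exactly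
the registers of `c j`. Its states are the positions in the word. -/
def codeAutomaton [Finite Sigma] : RsA Sigma where
  Q := Finset.range (m + m + 1)
  R := codeRegisters c m
  Δ := Set.range (fun p : Fin m × Sigma ↦ storeTrans c p.1 p.2) ∪
    Set.range (fun p : Fin m × Sigma ↦ testTrans c m p.1 p.2)
  I := {0}
  F := {m + m}
  finite_trans := Set.toFinite _
  I_sub := by simp
  F_sub := by simp
  wf := by
    rintro t (⟨⟨k, a⟩, rfl⟩ | ⟨⟨j, a⟩, rfl⟩)
    · refine ⟨?_, ?_, Finset.empty_subset _, Finset.empty_subset _, Finset.disjoint_empty_left _,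
        fun r hr r' hr' ↦ ?_⟩
      · simp only [storeTrans, Finset.mem_range]; omega
      · simp only [storeTrans, Finset.mem_range]; omega
      · have : r' = r := by
          simp only [storeTrans] at hr'
          split_ifs at hr' <;> simpa using hr'
        rwa [this]
    · refine ⟨?_, ?_, Finset.subset_biUnion_of_mem c (Finset.mem_range.2 j.2),
        Finset.sdiff_subset, Finset.disjoint_sdiff, fun r hr r' hr' ↦ ?_⟩
      · simp only [testTrans, Finset.mem_range]; omega
      · simp only [testTrans, Finset.mem_range]; omega
      · have : r' = r := by simpa [testTrans] using hr'
        rwa [this]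

/-- The register contents after storing the values of a word, whose first letter is at position `k`,
on top of the contents `f`. -/
def stored : ℕ → DataWord Sigma → (ℕ → Finset ℕ) → ℕ → Finset ℕ
  | _, [], f => f
  | k, x :: u, f => stored (k + 1) u fun r ↦ if r ∈ c k then insert x.2 (f r) else f r

variable {c m}

lemma mem_stored_iff {k : ℕ} {u : DataWord Sigma} {f : ℕ → Finset ℕ} {r d : ℕ} :
    d ∈ stored c k u f r ↔ d ∈ f r ∨ ∃ i : Fin u.length, r ∈ c (k + i) ∧ u[i].2 = d := by
  induction u generalizing k f with
  | nil => simp [stored]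
  | cons x u ih =>
    have hstore : d ∈ (if r ∈ c k then insert x.2 (f r) else f r) ↔
        d ∈ f r ∨ r ∈ c k ∧ x.2 = d := by
      split_ifs with h <;> simp [h, or_comm, eq_comm]
    have hshift (i : ℕ) : k + 1 + i = k + (i + 1) := by omega
    rw [stored, ih, hstore]
    simp [Fin.exists_fin_succ, hshift, or_assoc]

namespace codeAutomaton

variable [Finite Sigma]

lemma card_registers_le {n : ℕ} (hc : ∀ i < m, c i ⊆ Finset.range n) :
    (codeAutomaton Sigma c m).R.card ≤ n := by
  have hsub : (codeAutomaton Sigma c m).R ⊆ Finset.range n :=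
    Finset.biUnion_subset.2 fun i hi ↦ hc i (Finset.mem_range.1 hi)
  simpa only [Finset.card_range] using Finset.card_le_card hsub

lemma step_store_iff {k : ℕ} (hk : k < m) {f : ℕ → Finset ℕ} {x : Sigma × ℕ}
    {e : ℕ × (ℕ → Finset ℕ)} :
    (codeAutomaton Sigma c m).Step (k, f) x e ↔
      e = (k + 1, fun r ↦ if r ∈ c k then insert x.2 (f r) else f r) := by
  have happly : (storeTrans c k x.1).apply f x.2 =
      fun r ↦ if r ∈ c k then insert x.2 (f r) else f r := by
    ext r d
    simp only [RsATrans.apply, storeTrans]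
    split_ifs <;> simp
  rw [← happly]
  constructor
  · rintro ⟨t, ⟨⟨i, a⟩, rfl⟩ | ⟨⟨j, a⟩, rfl⟩, hsrc, hletter, -, -, rfl⟩
    · obtain rfl : (i : ℕ) = k := hsrc
      obtain rfl : a = x.1 := hletter
      rfl
    · have : m + j = k := hsrc
      omega
  · rintro rfl
    exact ⟨storeTrans c k x.1, .inl ⟨(⟨k, hk⟩, x.1), rfl⟩, rfl, rfl,
      fun _ h ↦ absurd h (Finset.notMem_empty _), fun _ h ↦ absurd h (Finset.notMem_empty _), rfl⟩

lemma step_test_iff {j : ℕ} (hj : j < m) {f : ℕ → Finset ℕ} {x : Sigma × ℕ}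
    {e : ℕ × (ℕ → Finset ℕ)} :
    (codeAutomaton Sigma c m).Step (m + j, f) x e ↔
      e = (m + j + 1, f) ∧ ∀ r ∈ codeRegisters c m, r ∈ c j ↔ x.2 ∈ f r := by
  have happly : (testTrans c m j x.1).apply f x.2 = f := by
    ext r d
    simp [RsATrans.apply, testTrans]
  have hguard : (∀ r ∈ codeRegisters c m, r ∈ c j ↔ x.2 ∈ f r) ↔
      (∀ r ∈ c j, x.2 ∈ f r) ∧ ∀ r ∈ codeRegisters c m \ c j, x.2 ∉ f r := by
    have hsub : c j ⊆ codeRegisters c m := Finset.subset_biUnion_of_mem c (Finset.mem_range.2 hj)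
    simp only [Finset.mem_sdiff]
    grind
  rw [hguard]
  constructor
  · rintro ⟨t, ⟨⟨i, a⟩, rfl⟩ | ⟨⟨i, a⟩, rfl⟩, hsrc, hletter, hin, hnin, rfl⟩
    · have : (i : ℕ) = m + j := hsrc
      omega
    · obtain rfl : (i : ℕ) = j := Nat.add_left_cancel hsrc
      obtain rfl : a = x.1 := hletter
      exact ⟨by rw [happly]; rfl, hin, hnin⟩
  · rintro ⟨rfl, hin, hnin⟩
    exact ⟨testTrans c m j x.1, .inr ⟨(⟨j, hj⟩, x.1), rfl⟩, rfl, rfl, hin, hnin,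
      by rw [happly]; rfl⟩

lemma run_store_iff {u : DataWord Sigma} {k : ℕ} (hk : k + u.length ≤ m) {f : ℕ → Finset ℕ}
    {e : ℕ × (ℕ → Finset ℕ)} :
    (codeAutomaton Sigma c m).Run (k, f) u e ↔ e = (k + u.length, stored c k u f) := by
  induction u generalizing k f with
  | nil => exact RsA.run_nil_iff
  | cons x u ih =>
    rw [List.length_cons] at hk
    simp only [RsA.run_cons_iff, step_store_iff (show k < m by omega), exists_eq_left]
    rw [ih (by omega), List.length_cons, stored, Nat.add_right_comm, Nat.add_assoc]

lemma run_test_iff {v : DataWord Sigma} {j : ℕ} (hj : j + v.length ≤ m) {f : ℕ → Finset ℕ}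
    {e : ℕ × (ℕ → Finset ℕ)} :
    (codeAutomaton Sigma c m).Run (m + j, f) v e ↔ e = (m + j + v.length, f) ∧
      ∀ i : Fin v.length, ∀ r ∈ codeRegisters c m, r ∈ c (j + i) ↔ v[i].2 ∈ f r := by
  induction v generalizing j with
  | nil => simp [RsA.run_nil_iff]
  | cons x v ih =>
    rw [List.length_cons] at hj
    have hshift (i : ℕ) : j + 1 + i = j + (i + 1) := by omega
    simp only [RsA.run_cons_iff, step_test_iff (show j < m by omega), and_assoc, exists_eq_left]
    rw [Nat.add_assoc m j 1, ih (by omega)]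
    simp [Fin.forall_fin_succ, hshift, Nat.add_assoc, and_left_comm]

theorem append_mem_lang_iff {u v : DataWord Sigma} (hu : u.length = m) (hv : v.length = m) :
    u ++ v ∈ (codeAutomaton Sigma c m).Lang ↔
      ∀ j : Fin v.length, ∀ r, r ∈ c j ↔ ∃ i : Fin u.length, r ∈ c i ∧ u[i].2 = v[j].2 := by
  have hregisters {r i : ℕ} (hi : i < m) (hr : r ∈ c i) : r ∈ codeRegisters c m :=
    Finset.mem_biUnion.2 ⟨i, Finset.mem_range.2 hi, hr⟩
  have hrun {e : ℕ × (ℕ → Finset ℕ)} :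
      (codeAutomaton Sigma c m).Run (0, fun _ ↦ ∅) (u ++ v) e ↔
        e = (m + m, stored c 0 u fun _ ↦ ∅) ∧ ∀ j : Fin v.length, ∀ r ∈ codeRegisters c m,
          r ∈ c j ↔ ∃ i : Fin u.length, r ∈ c i ∧ u[i].2 = v[j].2 := by
    have htest := run_test_iff (c := c) (j := 0) (by omega : 0 + v.length ≤ m)
      (f := stored c 0 u fun _ ↦ ∅) (e := e)
    simpa [RsA.run_append_iff, run_store_iff (by omega : 0 + u.length ≤ m), mem_stored_iff, hu,
      hv] using htest
  constructor
  · rintro ⟨q, hq, e, he, -⟩ j r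
    obtain rfl := Finset.mem_singleton.1 hq
    have hj := (hrun.1 he).2 j r
    refine ⟨fun hr ↦ (hj (hregisters (hv ▸ j.2) hr)).1 hr, fun h ↦ (hj ?_).2 h⟩
    obtain ⟨i, hr, -⟩ := h
    exact hregisters (hu ▸ i.2) hr
  · intro h
    exact ⟨0, Finset.mem_singleton_self _, _, hrun.2 ⟨rfl, fun j r _ ↦ h j r⟩,
      Finset.mem_singleton_self _⟩

end codeAutomaton

end CodeAutomaton

section Ramp

variable {Sigma : Type} {m : ℕ}

/-- The data word of length `m` with constant letter `a` and data values `0, 1, …, m - 1`. -/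
def ramp (a : Sigma) (m : ℕ) : DataWord Sigma :=
  (List.range m).map (Prod.mk a)

variable [Finite Sigma] {a : Sigma} {c : ℕ → Finset ℕ}

lemma ramp_append_rename_mem_lang_iff {π : ℕ → ℕ} :
    ramp a m ++ (ramp a m).rename π ∈ (codeAutomaton Sigma c m).Lang ↔
      ∀ j < m, ∀ r, r ∈ c j ↔ π j < m ∧ r ∈ c (π j) := by
  rw [codeAutomaton.append_mem_lang_iff (by simp [ramp]) (by simp [ramp, DataWord.rename])]
  simp [Fin.forall_iff, Fin.exists_iff, ramp, DataWord.rename, and_comm]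

lemma ramp_append_ramp_mem_lang : ramp a m ++ ramp a m ∈ (codeAutomaton Sigma c m).Lang := by
  have hid : (ramp a m).rename id = ramp a m := List.map_id _
  have hmem : ramp a m ++ (ramp a m).rename id ∈ (codeAutomaton Sigma c m).Lang :=
    ramp_append_rename_mem_lang_iff.2 fun j hj r ↦ by simp only [id_eq, hj, true_and]
  rwa [hid] at hmem

lemma apply_eq_self_of_ramp_append_rename_mem_lang {π : ℕ → ℕ} (hc : Set.InjOn c (Set.Iio m))
    {j : ℕ} (hj : j < m) (hne : (c j).Nonempty)
    (hmem : ramp a m ++ (ramp a m).rename π ∈ (codeAutomaton Sigma c m).Lang) : π j = j := by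
  have hiff := ramp_append_rename_mem_lang_iff.1 hmem j hj
  obtain ⟨r, hr⟩ := hne
  have hπ : π j < m := ((hiff r).1 hr).1
  have hcode : c j = c (π j) := Finset.ext fun r ↦ by simpa only [hπ, true_and] using hiff r
  exact (hc hj hπ hcode).symm

theorem lt_two_pow_card_registers_of_lang_eq_inter [Nonempty Sigma] {c₁ c₂ : ℕ → Finset ℕ}
    (hc₁ : Set.InjOn c₁ (Set.Iio m)) (hc₂ : Set.InjOn c₂ (Set.Iio m))
    (hne : ∀ i < m, (c₁ i ∪ c₂ i).Nonempty) {A : RsA Sigma}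
    (hA : A.Lang = (codeAutomaton Sigma c₁ m).Lang ∩ (codeAutomaton Sigma c₂ m).Lang) :
    m < 2 ^ A.R.card := by
  obtain ⟨a⟩ := ‹Nonempty Sigma›
  have hmem : ramp a m ++ ramp a m ∈ A.Lang :=
    hA ▸ ⟨ramp_append_ramp_mem_lang, ramp_append_ramp_mem_lang⟩
  have hfix (π : Equiv.Perm ℕ) (hπ : ramp a m ++ (ramp a m).rename π ∈ A.Lang) :
      ∀ i ∈ Finset.range m, π i = i := by
    intro i hi
    rw [Finset.mem_range] at hi
    obtain ⟨hπ₁, hπ₂⟩ := hA ▸ hπ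
    rcases Finset.union_nonempty.1 (hne i hi) with hi₁ | hi₂
    · exact apply_eq_self_of_ramp_append_rename_mem_lang hc₁ hi hi₁ hπ₁
    · exact apply_eq_self_of_ramp_append_rename_mem_lang hc₂ hi hi₂ hπ₂
  simpa only [Finset.card_range] using RsA.card_lt_two_pow_card_registers hmem hfix

end Ramp

section Codes

lemma equivBitIndices_subset_range {n i : ℕ} (hi : i < 2 ^ n) :
    Finset.equivBitIndices i ⊆ Finset.range n := by
  intro r hr
  have : 2 ^ r ≤ i := Nat.two_pow_le_of_mem_bitIndices (List.mem_toFinset.1 hr)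
  exact Finset.mem_range.2 ((Nat.pow_lt_pow_iff_right one_lt_two).1 (this.trans_lt hi))

lemma injOn_range_sdiff_equivBitIndices (n : ℕ) :
    Set.InjOn (fun i ↦ Finset.range n \ Finset.equivBitIndices i) (Set.Iio (2 ^ n)) :=
  fun _ hi _ hj h ↦ Finset.equivBitIndices.injective <|
    (sdiff_right_inj (equivBitIndices_subset_range hi) (equivBitIndices_subset_range hj)).1 h

end Codes

/-- For each `n ≥ 1`, the class of languages of RsAs with at most
`n` registers is not closed under intersection. -/
theorem rsa_n_not_closed_under_intersection (Sigma : Type) [Fintype Sigma]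
    [Nonempty Sigma] (n : ℕ) (hn : 1 ≤ n) :
    ∃ L₁ L₂ : Set (DataWord Sigma),
      (∃ A₁ : RsA Sigma, A₁.R.card ≤ n ∧ RsA.Lang A₁ = L₁) ∧
      (∃ A₂ : RsA Sigma, A₂.R.card ≤ n ∧ RsA.Lang A₂ = L₂) ∧
      ¬ ∃ A : RsA Sigma, A.R.card ≤ n ∧ RsA.Lang A = L₁ ∩ L₂ := by
  let c₁ : ℕ → Finset ℕ := Finset.equivBitIndices
  let c₂ : ℕ → Finset ℕ := fun i ↦ Finset.range n \ c₁ i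
  have hc₁ : ∀ i < 2 ^ n, c₁ i ⊆ Finset.range n := fun _ ↦ equivBitIndices_subset_range
  have hc₂ : ∀ i < 2 ^ n, c₂ i ⊆ Finset.range n := fun _ _ ↦ Finset.sdiff_subset
  refine ⟨_, _, ⟨codeAutomaton Sigma c₁ (2 ^ n), codeAutomaton.card_registers_le hc₁, rfl⟩,
    ⟨codeAutomaton Sigma c₂ (2 ^ n), codeAutomaton.card_registers_le hc₂, rfl⟩, ?_⟩
  rintro ⟨A, hA, hL⟩
  have hne (i : ℕ) (hi : i < 2 ^ n) : (c₁ i ∪ c₂ i).Nonempty := by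
    rw [Finset.union_sdiff_of_subset (hc₁ i hi)]
    exact ⟨0, Finset.mem_range.2 hn⟩
  have hlt : 2 ^ n < 2 ^ A.R.card := lt_two_pow_card_registers_of_lang_eq_inter
    Finset.equivBitIndices.injective.injOn (injOn_range_sdiff_equivBitIndices n) hne hL
  exact hlt.not_ge (Nat.pow_le_pow_right two_pos hA)
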